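/- Let j be a symmetric gauge function on ℝ^{2n}, Σ = j⁻¹(1), T > 0, and suppose that the set P := {τ > 0 : there exists a closed characteristic (τ, y) on Σ with y(t + τ/2) = −y(t) for all t} has positive infimum τ̂ > 0. Let a > τ̂/T and let φ : ℝ → ℝ be a smooth function satisfying: φ(t) ≥ 0, φ(0) = φ'(0) = 0, φ''(0) = 1, φ'(t) > 0 for t > 0, t ↦ φ'(t)/t strictly decreasing on (0,∞), and lim_{t→+∞} φ'(t)/t < τ̂/(aT); set H̃(x) = a·φ(j(x)). Then for every sufficiently small ε > 0 there exist A > 0, R > 0 and a function H̄ : ℝ^{2n} → ℝ such that: H̄(−x) = H̄(x) for all x; H̄ is C¹ on ℝ^{2n} and C³ on ℝ^{2n}∖{0}; H̄(x) = H̃(x) for all x with H̃(x) ≤ A; H̄(x) = (ε/2)|x|² for all |x| ≥ R; and the T-antiperiodic problem ẋ(t) = J∇H̄(x(t)), x(t + T/2) = −x(t) for all t, has exactly the same solutions as the T-antiperiodic problem ẋ(t) = J∇H̃(x(t)), x(t + T/2) = −x(t) for all t. -/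

import Mathlib

open Set Filter

noncomputable section

/-- `ℝ^{2n}`, written with index type `Fin n ⊕ Fin n`. -/
abbrev Esp (n : ℕ) := EuclideanSpace ℝ (Fin n ⊕ Fin n)

/-- The standard symplectic matrix `J = [[0, −I_n],[I_n, 0]]`. -/
def Jmat (n : ℕ) : Matrix (Fin n ⊕ Fin n) (Fin n ⊕ Fin n) ℝ :=
  Matrix.fromBlocks 0 (-1) 1 0

/-- `J` as a continuous linear map on `ℝ^{2n}`. -/
def Jc (n : ℕ) : Esp n →L[ℝ] Esp n :=
  LinearMap.toContinuousLinearMap (Matrix.toEuclideanLin (Jmat n))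

/-- A symmetric gauge function on `ℝ^{2n}`. -/
def IsSymGauge (n : ℕ) (j : Esp n → ℝ) : Prop :=
  Continuous j ∧ ContDiffOn ℝ 3 j {(0 : Esp n)}ᶜ ∧
  (∀ l : ℝ, 0 ≤ l → ∀ x, j (l • x) = l * j x) ∧
  (∀ x, x ≠ 0 → 0 < j x) ∧ (∀ x, j (-x) = j x)

/-- A closed characteristic `(τ, y)` on `Σ = j⁻¹(1)`. -/
def IsClosedCharacteristic (n : ℕ) (j : Esp n → ℝ) (τ : ℝ) (y : ℝ → Esp n) : Prop :=
  0 < τ ∧ ContDiff ℝ 1 y ∧ (∃ s t, y s ≠ y t) ∧ (∀ t, j (y t) = 1) ∧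
  (∀ t, HasDerivAt y (Jc n (gradient j (y t))) t) ∧ (∀ t, y (t + τ) = y t)


lemma Jc_inl (n : ℕ) (v : Esp n) (i : Fin n) : (Jc n v) (Sum.inl i) = - v (Sum.inr i) := by
  simp [Jc, Jmat, Matrix.toLpLin_apply, Matrix.mulVec, dotProduct, Matrix.one_apply]

lemma Jc_inr (n : ℕ) (v : Esp n) (i : Fin n) : (Jc n v) (Sum.inr i) = v (Sum.inl i) := by
  simp [Jc, Jmat, Matrix.toLpLin_apply, Matrix.mulVec, dotProduct, Matrix.one_apply]

lemma Jc_norm (n : ℕ) (v : Esp n) : ‖Jc n v‖ = ‖v‖ := by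
  rw [EuclideanSpace.norm_eq, EuclideanSpace.norm_eq]
  congr 1
  simp [Fintype.sum_sum_type, Jc_inl, Jc_inr, add_comm]

lemma Jc_inner (n : ℕ) (v : Esp n) : inner ℝ v (Jc n v) = 0 := by
  rw [PiLp.inner_apply]
  simp only [Fintype.sum_sum_type, Jc_inl, Jc_inr]
  rw [← Finset.sum_add_distrib]
  apply Finset.sum_eq_zero
  intro i _
  simp
  ring

/-- antiperiodic curves with small linear growth of the velocity vanish -/
lemma antiperiodic_zero {E : Type*} [NormedAddCommGroup E] [NormedSpace ℝ E]
    (T K : ℝ) (hT : 0 < T) (hK : 0 ≤ K) (hKT : K * T < 4) (x v : ℝ → E)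
    (hx : ∀ t, HasDerivAt x (v t) t) (hv : ∀ t, ‖v t‖ ≤ K * ‖x t‖)
    (hanti : ∀ t, x (t + T / 2) = - x t) : ∀ t, x t = 0 := by
  have hc : Continuous x := continuous_iff_continuousAt.2 fun t => (hx t).continuousAt
  obtain ⟨s, hs, hmax⟩ := (isCompact_Icc (a := (0:ℝ)) (b := T / 2)).exists_isMaxOn
    ⟨0, by simp; positivity⟩ hc.norm.continuousOn
  have hper : Function.Periodic (fun t => ‖x t‖) (T / 2) := by
    intro t
    simp [hanti]
  have hall : ∀ t, ‖x t‖ ≤ ‖x s‖ := by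
    intro t
    obtain ⟨u, hu, hu'⟩ := hper.exists_mem_Ico₀ (by positivity) t
    have := hmax (Ico_subset_Icc_self hu)
    change ‖x t‖ = ‖x u‖ at hu'
    rw [hu']
    exact this
  have h1 := Convex.norm_image_sub_le_of_norm_hasDerivWithin_le (s := univ) (f := x) (f' := v)
    (C := K * ‖x s‖) (x := s) (y := s + T / 2) (fun t _ => (hx t).hasDerivWithinAt)
    (fun t _ => (hv t).trans (mul_le_mul_of_nonneg_left (hall t) hK)) convex_univ
    (mem_univ _) (mem_univ _)
  rw [hanti] at h1
  have h2 : ‖-x s - x s‖ = 2 * ‖x s‖ := by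
    rw [show -x s - x s = (-2 : ℝ) • x s by module, norm_smul]
    norm_num
  rw [h2, add_sub_cancel_left, Real.norm_of_nonneg (by positivity)] at h1
  have h3 : ‖x s‖ = 0 := by
    by_contra h
    have : 0 < ‖x s‖ := lt_of_le_of_ne (norm_nonneg _) (Ne.symm h)
    nlinarith
  intro t
  have := hall t
  rw [h3] at this
  simpa using this

section Gauge

variable {n : ℕ} {j : Esp n → ℝ}

lemma IsSymGauge.zero (hj : IsSymGauge n j) : j 0 = 0 := by
  have := hj.2.2.1 0 le_rfl 0
  simpa using this

lemma IsSymGauge.nonneg (hj : IsSymGauge n j) (x : Esp n) : 0 ≤ j x := by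
  by_cases h : x = 0
  · rw [h, hj.zero]
  · exact (hj.2.2.2.1 x h).le

lemma IsSymGauge.contDiffAt (hj : IsSymGauge n j) {x : Esp n} (hx : x ≠ 0) :
    ContDiffAt ℝ 3 j x :=
  hj.2.1.contDiffAt (isOpen_compl_singleton.mem_nhds hx)

lemma IsSymGauge.diffAt (hj : IsSymGauge n j) {x : Esp n} (hx : x ≠ 0) :
    DifferentiableAt ℝ j x := (hj.contDiffAt hx).differentiableAt (by norm_num)

lemma IsSymGauge.fderiv_smul (hj : IsSymGauge n j) {x : Esp n} (hx : x ≠ 0) {l : ℝ} (hl : 0 < l) :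
    fderiv ℝ j (l • x) = fderiv ℝ j x := by
  have hlx : l • x ≠ 0 := smul_ne_zero hl.ne' hx
  have h1 : HasFDerivAt (fun z => j (l • z)) ((fderiv ℝ j (l • x)).comp
      (l • ContinuousLinearMap.id ℝ (Esp n))) x :=
    HasFDerivAt.comp x (g := j) (f := fun z => l • z) (hj.diffAt hlx).hasFDerivAt
      ((hasFDerivAt_id x).const_smul l)
  have h2 : HasFDerivAt (fun z => j (l • z)) (l • fderiv ℝ j x) x := by
    have : (fun z => j (l • z)) = fun z => l * j z := by
      funext z
      exact hj.2.2.1 l hl.le z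
    rw [this]
    exact (hj.diffAt hx).hasFDerivAt.const_mul l
  have h3 := h1.unique h2
  ext v
  have h4 := congrArg (fun L : Esp n →L[ℝ] ℝ => L v) h3
  simp at h4
  rcases h4 with h4 | h4
  · exact h4
  · exact absurd h4 hl.ne'

lemma IsSymGauge.gradient_smul (hj : IsSymGauge n j) {x : Esp n} (hx : x ≠ 0) {l : ℝ}
    (hl : 0 < l) : gradient j (l • x) = gradient j x := by
  unfold gradient
  rw [hj.fderiv_smul hx hl]

lemma IsSymGauge.fderiv_continuousOn (hj : IsSymGauge n j) :
    ContinuousOn (fderiv ℝ j) {(0 : Esp n)}ᶜ :=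
  hj.2.1.continuousOn_fderiv_of_isOpen isOpen_compl_singleton (by norm_num)

lemma IsSymGauge.gradient_continuousOn (hj : IsSymGauge n j) :
    ContinuousOn (gradient j) {(0 : Esp n)}ᶜ :=
  (InnerProductSpace.toDual ℝ (Esp n)).symm.continuous.comp_continuousOn hj.fderiv_continuousOn

lemma sphere_sub : Metric.sphere (0 : Esp n) 1 ⊆ {(0 : Esp n)}ᶜ := by
  intro x hx h
  simp at h
  simp [h] at hx

lemma unit_decomp {x : Esp n} (hx : x ≠ 0) :
    ‖x‖⁻¹ • x ∈ Metric.sphere (0 : Esp n) 1 ∧ x = ‖x‖ • (‖x‖⁻¹ • x) ∧ 0 < ‖x‖ := by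
  have h : ‖x‖ ≠ 0 := norm_ne_zero_iff.2 hx
  refine ⟨?_, ?_, norm_pos_iff.2 hx⟩
  · simp [norm_smul, h]
  · rw [smul_smul, mul_inv_cancel₀ h, one_smul]

lemma IsSymGauge.fderiv_bound (hj : IsSymGauge n j) :
    ∃ C, 0 ≤ C ∧ ∀ x, x ≠ 0 → ‖fderiv ℝ j x‖ ≤ C := by
  obtain ⟨C, hC⟩ := (isCompact_sphere (0 : Esp n) 1).exists_bound_of_continuousOn
    (hj.fderiv_continuousOn.mono sphere_sub)
  refine ⟨max C 0, le_max_right _ _, fun x hx => ?_⟩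
  obtain ⟨h1, h2, h3⟩ := unit_decomp hx
  rw [h2, hj.fderiv_smul (sphere_sub h1) h3]
  exact (hC _ h1).trans (le_max_left _ _)

lemma IsSymGauge.upper (hj : IsSymGauge n j) : ∃ C, 0 ≤ C ∧ ∀ x, j x ≤ C * ‖x‖ := by
  obtain ⟨C, hC⟩ := (isCompact_sphere (0 : Esp n) 1).exists_bound_of_continuousOn
    hj.1.continuousOn
  refine ⟨max C 0, le_max_right _ _, fun x => ?_⟩
  by_cases hx : x = 0
  · simp [hx, hj.zero]
  obtain ⟨h1, h2, h3⟩ := unit_decomp hx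
  have h4 : j x = ‖x‖ * j (‖x‖⁻¹ • x) := by
    conv_lhs => rw [h2]
    exact hj.2.2.1 _ h3.le _
  rw [h4, mul_comm]
  gcongr
  exact (le_abs_self _).trans ((hC _ h1).trans (le_max_left _ _))

lemma IsSymGauge.lower (hj : IsSymGauge n j) : ∃ C, 0 ≤ C ∧ ∀ x, ‖x‖ ≤ C * j x := by
  have hcont : ContinuousOn (fun x => (j x)⁻¹) (Metric.sphere (0 : Esp n) 1) :=
    hj.1.continuousOn.inv₀ fun x hx => (hj.2.2.2.1 x (sphere_sub hx)).ne'
  obtain ⟨C, hC⟩ := (isCompact_sphere (0 : Esp n) 1).exists_bound_of_continuousOn hcont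
  refine ⟨max C 0, le_max_right _ _, fun x => ?_⟩
  by_cases hx : x = 0
  · simp [hx, hj.zero]
  obtain ⟨h1, h2, h3⟩ := unit_decomp hx
  have h4 : j x = ‖x‖ * j (‖x‖⁻¹ • x) := by
    conv_lhs => rw [h2]
    exact hj.2.2.1 _ h3.le _
  have h5 := hj.2.2.2.1 _ (sphere_sub h1)
  have h6 : (j (‖x‖⁻¹ • x))⁻¹ ≤ max C 0 :=
    (le_abs_self _).trans ((hC _ h1).trans (le_max_left _ _))
  have h7 : 1 ≤ max C 0 * j (‖x‖⁻¹ • x) := by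
    rwa [inv_le_iff_one_le_mul₀ h5] at h6
  rw [h4]
  nlinarith

/-- derivative of `ψ ∘ j` -/
lemma IsSymGauge.comp_hasFDerivAt (hj : IsSymGauge n j) {ψ : ℝ → ℝ} (hψ : Differentiable ℝ ψ)
    (hψ0 : deriv ψ 0 = 0) (x : Esp n) :
    HasFDerivAt (fun z => ψ (j z)) (deriv ψ (j x) • fderiv ℝ j x) x := by
  by_cases hx : x = 0
  · subst hx
    rw [hj.zero, hψ0, zero_smul]
    have h1 : HasDerivAt ψ 0 (j 0) := by
      rw [hj.zero]
      simpa [hψ0] using (hψ 0).hasDerivAt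
    have h2 := (hasDerivAt_iff_isLittleO.1 h1).comp_tendsto (hj.1.tendsto 0)
    obtain ⟨C, hC0, hC⟩ := hj.upper
    have h3 : (fun z => j z - j 0) =O[nhds 0] (fun z : Esp n => z - 0) := by
      refine Asymptotics.IsBigO.of_bound C (Eventually.of_forall fun z => ?_)
      rw [hj.zero, sub_zero, sub_zero, Real.norm_of_nonneg (hj.nonneg z)]
      exact hC z
    have h4 := h2.trans_isBigO h3
    rw [hasFDerivAt_iff_isLittleO]
    simpa [Function.comp_def] using h4
  · exact (hψ (j x)).hasDerivAt.comp_hasFDerivAt x (hj.diffAt hx).hasFDerivAt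

lemma IsSymGauge.comp_hasGradientAt (hj : IsSymGauge n j) {ψ : ℝ → ℝ} (hψ : Differentiable ℝ ψ)
    (hψ0 : deriv ψ 0 = 0) (x : Esp n) :
    HasGradientAt (fun z => ψ (j z)) (deriv ψ (j x) • gradient j x) x := by
  rw [hasGradientAt_iff_hasFDerivAt, map_smul, toDual_gradient]
  exact hj.comp_hasFDerivAt hψ hψ0 x

lemma IsSymGauge.comp_contDiff (hj : IsSymGauge n j) {ψ : ℝ → ℝ} (hψ : ContDiff ℝ 1 ψ)
    (hψ0 : deriv ψ 0 = 0) : ContDiff ℝ 1 (fun z => ψ (j z)) := by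
  rw [contDiff_one_iff_hasFDerivAt]
  refine ⟨fun x => deriv ψ (j x) • fderiv ℝ j x, ?_,
    hj.comp_hasFDerivAt (hψ.differentiable (by norm_num)) hψ0⟩
  have hd : Continuous fun x => deriv ψ (j x) := (hψ.continuous_deriv le_rfl).comp hj.1
  rw [continuous_iff_continuousAt]
  intro x
  by_cases hx : x = 0
  · subst hx
    obtain ⟨C, hC0, hC⟩ := hj.fderiv_bound
    have hz : deriv ψ (j 0) • fderiv ℝ j 0 = 0 := by rw [hj.zero, hψ0, zero_smul]
    change Tendsto _ _ (nhds (deriv ψ (j 0) • fderiv ℝ j 0))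
    rw [hz]
    have hlim : Tendsto (fun x => C * |deriv ψ (j x)|) (nhds (0 : Esp n)) (nhds 0) := by
      have h5 : Continuous (fun x => C * |deriv ψ (j x)|) := continuous_const.mul hd.abs
      simpa [hj.zero, hψ0] using h5.tendsto (0 : Esp n)
    refine squeeze_zero_norm (fun z => ?_) hlim
    by_cases hzz : z = 0
    · subst hzz
      rw [hz, norm_zero]
      positivity
    · rw [norm_smul, mul_comm]
      gcongr
      · exact hC z hzz
      · exact le_rfl
  · exact hd.continuousAt.smul
      (hj.fderiv_continuousOn.continuousAt (isOpen_compl_singleton.mem_nhds hx))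

/-- conservation of `j` -/
lemma IsSymGauge.conserved (hj : IsSymGauge n j) (x : ℝ → Esp n) (k : ℝ → ℝ) (v : ℝ → Esp n)
    (hx : ∀ t, HasDerivAt x (v t) t) (c3 : ℝ)
    (hv : ∀ t, j (x t) < c3 → v t = k t • Jc n (gradient j (x t)))
    (t0 : ℝ) (h0 : j (x t0) < c3) : ∀ t, j (x t) = j (x t0) := by
  have hc : Continuous x := continuous_iff_continuousAt.2 fun t => (hx t).continuousAt
  have hjc : Continuous fun t => j (x t) := hj.1.comp hc
  have hsq : ∀ t, j (x t) < c3 → HasDerivAt (fun t => (j (x t)) ^ 2) 0 t := by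
    intro t ht
    have h1 := hj.comp_hasFDerivAt (ψ := fun s => s ^ 2) (by fun_prop) (by simp) (x t)
    have h2 := h1.comp_hasDerivAt t (hx t)
    rw [hv t ht, smul_apply, map_smul, ← inner_gradient_left (𝕜 := ℝ), Jc_inner,
      smul_zero, smul_zero] at h2
    exact h2
  have hopen : IsOpen {t | j (x t) < c3} := isOpen_lt hjc continuous_const
  have h1 := hopen.isOpen_inter_preimage_of_fderiv_eq_zero (𝕜 := ℝ)
    (f := fun t => (j (x t)) ^ 2)
    (fun t ht => (hsq t ht).differentiableAt.differentiableWithinAt)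
    (fun t ht => by
      have := (hsq t ht).hasFDerivAt.fderiv
      rw [this]
      ext
      simp) {(j (x t0)) ^ 2}
  have h2 : {t | j (x t) < c3} ∩ (fun t => (j (x t)) ^ 2) ⁻¹' {(j (x t0)) ^ 2}
      = {t | j (x t) = j (x t0)} := by
    ext t
    simp only [mem_inter_iff, mem_ofPred_eq, mem_preimage, mem_singleton_iff]
    constructor
    · rintro ⟨_, h⟩
      exact (sq_eq_sq₀ (hj.nonneg _) (hj.nonneg _)).1 h
    · intro h
      rw [h]
      exact ⟨h0, rfl⟩
  rw [h2] at h1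
  have h3 : IsClopen {t | j (x t) = j (x t0)} := ⟨isClosed_eq hjc continuous_const, h1⟩
  rcases isClopen_iff.1 h3 with h | h
  · exact absurd (show t0 ∈ {t | j (x t) = j (x t0)} from rfl) (by rw [h]; simp)
  · intro t
    have : t ∈ {t | j (x t) = j (x t0)} := by rw [h]; trivial
    exact this

/-- rescaling an antiperiodic orbit to a closed characteristic -/
lemma IsSymGauge.rescale (hj : IsSymGauge n j) (T : ℝ) (hT : 0 < T) (x : ℝ → Esp n) (k c : ℝ)
    (hk : 0 < k) (hc : 0 < c) (hjx : ∀ t, j (x t) = c)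
    (hx : ∀ t, HasDerivAt x (k • Jc n (gradient j (x t))) t)
    (hanti : ∀ t, x (t + T / 2) = - x t) :
    ∃ y : ℝ → Esp n, IsClosedCharacteristic n j (T * k / c) y ∧
      ∀ t, y (t + (T * k / c) / 2) = - y t := by
  have hne : ∀ t, x t ≠ 0 := by
    intro t h
    have := hjx t
    rw [h, hj.zero] at this
    exact hc.ne this
  have hya : ∀ t, c⁻¹ • x ((c / k) * (t + (T * k / c) / 2)) = - (c⁻¹ • x ((c / k) * t)) := by
    intro t
    have : (c / k) * (t + (T * k / c) / 2) = (c / k) * t + T / 2 := by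
      field_simp
    rw [this, hanti, smul_neg]
  have hci : 0 < c⁻¹ := by positivity
  have hder : ∀ t, HasDerivAt (fun t => c⁻¹ • x ((c / k) * t))
      (Jc n (gradient j (c⁻¹ • x ((c / k) * t)))) t := by
    intro t
    have h1 : HasDerivAt (fun t : ℝ => (c / k) * t) (c / k) t := by
      simpa using (hasDerivAt_id t).const_mul (c / k)
    have h2 := ((hx ((c / k) * t)).scomp t h1).const_smul c⁻¹
    rw [hj.gradient_smul (hne _) hci]
    rw [smul_smul, smul_smul, show c⁻¹ * (c / k) * k = 1 by field_simp, one_smul] at h2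
    exact h2
  refine ⟨fun t => c⁻¹ • x ((c / k) * t), ⟨by positivity, ?_, ?_, ?_, hder, ?_⟩, hya⟩
  · rw [contDiff_one_iff_deriv]
    refine ⟨fun t => (hder t).differentiableAt, ?_⟩
    have : deriv (fun t => c⁻¹ • x ((c / k) * t)) =
        fun t => Jc n (gradient j (c⁻¹ • x ((c / k) * t))) := by
      funext t
      exact (hder t).deriv
    rw [this]
    have hcy : Continuous (fun t => c⁻¹ • x ((c / k) * t)) :=
      continuous_iff_continuousAt.2 fun t => (hder t).continuousAt
    exact (Jc n).continuous.comp
      (hj.gradient_continuousOn.comp_continuous hcy fun t => smul_ne_zero hci.ne' (hne _))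
  · refine ⟨0 + (T * k / c) / 2, 0, ?_⟩
    show c⁻¹ • x ((c / k) * (0 + (T * k / c) / 2)) ≠ c⁻¹ • x ((c / k) * 0)
    rw [hya]
    intro h
    have h' : c⁻¹ • x ((c / k) * 0) = 0 := by
      have h2 : (2 : ℝ) • (c⁻¹ • x ((c / k) * 0)) = 0 := by
        rw [two_smul]
        nth_rewrite 1 [← h]
        exact neg_add_cancel _
      exact (smul_eq_zero.1 h2).resolve_left two_ne_zero
    exact smul_ne_zero hci.ne' (hne _) h'
  · intro t
    show j (c⁻¹ • x ((c / k) * t)) = 1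
    rw [hj.2.2.1 _ hci.le, hjx]
    field_simp
  · intro t
    have : t + T * k / c = (t + (T * k / c) / 2) + (T * k / c) / 2 := by ring
    show c⁻¹ • x ((c / k) * (t + T * k / c)) = c⁻¹ • x ((c / k) * t)
    rw [this, hya, hya, neg_neg]

end Gauge

lemma exists_truncation (φ : ℝ → ℝ) (hφ : ContDiff ℝ (⊤ : ℕ∞) φ) (hφ0 : φ 0 = 0) (c : ℝ)
    (hc : 0 < c) (hφpos : ∀ t, 0 < t → 0 < deriv φ t) :
    ∃ (ψ : ℝ → ℝ) (B : ℝ), ContDiff ℝ 3 ψ ∧ (∀ t, 0 ≤ t → t ≤ c → ψ t = φ t) ∧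
      (∀ t, t ≤ c → deriv ψ t = deriv φ t) ∧
      (∀ t, c + 1 ≤ t → ψ t = B) ∧ (∀ t, c + 1 ≤ t → deriv ψ t = 0) ∧
      (∀ t, 0 < t → 0 ≤ deriv ψ t ∧ deriv ψ t ≤ deriv φ t) := by
  have hφ' : ContDiff ℝ (⊤ : ℕ∞) (deriv φ) := (contDiff_infty_iff_deriv.1 hφ).2
  set f : ℝ → ℝ := fun t => (1 - Real.smoothTransition (t - c)) * deriv φ t with hf
  have hfs : ContDiff ℝ 2 f := by
    refine ContDiff.mul (contDiff_const.sub (ContDiff.comp (g := Real.smoothTransition)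
      (Real.smoothTransition.contDiff (n := 2)) (contDiff_id.sub contDiff_const)))
      (by exact_mod_cast contDiff_infty.1 hφ' 2)
  have hd : ∀ t, HasDerivAt (fun t => ∫ s in (0:ℝ)..t, f s) (f t) t := fun t =>
    intervalIntegral.integral_hasDerivAt_right (hfs.continuous.intervalIntegrable _ _)
      (hfs.continuous.stronglyMeasurableAtFilter _ _) hfs.continuous.continuousAt
  have hd' : deriv (fun t => ∫ s in (0:ℝ)..t, f s) = f := funext fun t => (hd t).deriv
  have hz : ∀ t, c + 1 ≤ t → f t = 0 := by
    intro t ht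
    simp [hf, Real.smoothTransition.one_of_one_le (show 1 ≤ t - c by linarith)]
  have hone : ∀ t, t ≤ c → f t = deriv φ t := by
    intro t ht
    simp [hf, Real.smoothTransition.zero_of_nonpos (show t - c ≤ 0 by linarith)]
  refine ⟨fun t => ∫ s in (0:ℝ)..t, f s, ∫ s in (0:ℝ)..(c + 1), f s, ?_, ?_, ?_, ?_, ?_, ?_⟩
  · rw [show (3 : WithTop ℕ∞) = 2 + 1 by norm_num, contDiff_succ_iff_deriv, hd']
    exact ⟨fun t => (hd t).differentiableAt, by simp, hfs⟩
  · intro t ht0 ht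
    have h1 : ∫ s in (0:ℝ)..t, f s = ∫ s in (0:ℝ)..t, deriv φ s := by
      apply intervalIntegral.integral_congr
      intro s hs
      rw [uIcc_of_le ht0] at hs
      exact hone s (hs.2.trans ht)
    show ∫ s in (0:ℝ)..t, f s = φ t
    rw [h1, intervalIntegral.integral_deriv_eq_sub
      (fun s _ => hφ.differentiable (by simp) s)
      (hφ'.continuous.intervalIntegrable _ _), hφ0, sub_zero]
  · intro t ht
    rw [hd']
    exact hone t ht
  · intro t ht
    show ∫ s in (0:ℝ)..t, f s = _
    rw [← intervalIntegral.integral_add_adjacent_intervals (b := c + 1)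
      (hfs.continuous.intervalIntegrable _ _) (hfs.continuous.intervalIntegrable _ _)]
    have h1 : ∫ s in (c+1)..t, f s = ∫ s in (c+1)..t, (0:ℝ) := by
      apply intervalIntegral.integral_congr
      intro s hs
      rw [uIcc_of_le ht] at hs
      exact hz s hs.1
    rw [h1]
    simp
  · intro t ht
    rw [hd']
    exact hz t ht
  · intro t ht
    rw [hd']
    have h0 := Real.smoothTransition.nonneg (t - c)
    have h1 := Real.smoothTransition.le_one (t - c)
    have h2 := hφpos t ht
    constructor
    · exact mul_nonneg (by linarith) h2.le
    · show (1 - Real.smoothTransition (t - c)) * deriv φ t ≤ deriv φ t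
      nlinarith

lemma exists_transition_bound : ∃ C : ℝ, 0 ≤ C ∧ ∀ s ∈ Icc (0:ℝ) 1,
    |deriv Real.smoothTransition s| ≤ C := by
  have hc : Continuous (deriv Real.smoothTransition) :=
    ContDiff.continuous_deriv (n := 1) (Real.smoothTransition.contDiff (n := 1)) le_rfl
  obtain ⟨C, hC⟩ := (isCompact_Icc (a := (0:ℝ)) (b := 1)).exists_bound_of_continuousOn
    hc.continuousOn
  exact ⟨max C 0, le_max_right _ _, fun s hs => (hC s hs).trans (le_max_left _ _)⟩

lemma exists_outer (C : ℝ) (hC0 : 0 ≤ C)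
    (hC : ∀ s ∈ Icc (0:ℝ) 1, |deriv Real.smoothTransition s| ≤ C)
    (ε b M : ℝ) (hε : 0 < ε) (hM : 0 < M) :
    ∃ g : ℝ → ℝ, ContDiff ℝ 3 g ∧ (∀ s, s ≤ M → g s = 0) ∧ (∀ s, s < M → deriv g s = 0) ∧
      (∀ s, 2 * M ≤ s → g s = ε / 2 * s - b) ∧
      (∀ s, |deriv g s| ≤ ε / 2 + C / M * (ε * M + |b|)) := by
  set g : ℝ → ℝ := fun s => Real.smoothTransition (s / M - 1) * (ε / 2 * s - b) with hg
  have hsm : ContDiff ℝ 3 Real.smoothTransition := Real.smoothTransition.contDiff (n := 3)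
  have hgs : ContDiff ℝ 3 g :=
    (ContDiff.comp (g := Real.smoothTransition) hsm
      ((contDiff_id.div_const M).sub contDiff_const)).mul
      ((contDiff_const.mul contDiff_id).sub contDiff_const)
  have h0 : ∀ s, s ≤ M → g s = 0 := by
    intro s hs
    have : s / M - 1 ≤ 0 := by
      rw [sub_nonpos, div_le_one hM]
      exact hs
    simp [hg, Real.smoothTransition.zero_of_nonpos this]
  have h2 : ∀ s, 2 * M ≤ s → g s = ε / 2 * s - b := by
    intro s hs
    have : 1 ≤ s / M - 1 := by
      rw [le_sub_iff_add_le, le_div_iff₀ hM]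
      linarith
    simp [hg, Real.smoothTransition.one_of_one_le this]
  have hd0 : ∀ s, s < M → deriv g s = 0 := by
    intro s hs
    have : g =ᶠ[nhds s] fun _ => 0 := by
      filter_upwards [Iio_mem_nhds hs] with u hu using h0 u (le_of_lt hu)
    rw [this.deriv_eq]
    simp
  have hP : 0 ≤ C / M * (ε * M + |b|) := by positivity
  refine ⟨g, hgs, h0, hd0, h2, fun s => ?_⟩
  rcases lt_or_ge s M with h | h
  · rw [hd0 s h, abs_zero]
    positivity
  rcases lt_or_ge (2 * M) s with h' | h'
  · have : g =ᶠ[nhds s] fun u => ε / 2 * u - b := by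
      filter_upwards [Ioi_mem_nhds h'] with u hu using h2 u (le_of_lt hu)
    have hdd : HasDerivAt (fun u : ℝ => ε / 2 * u - b) (ε / 2) s := by
      simpa using ((hasDerivAt_id s).const_mul (ε / 2)).sub_const b
    rw [this.deriv_eq, hdd.deriv, abs_of_pos (by positivity)]
    linarith
  · have e1 : HasDerivAt (fun u : ℝ => u / M - 1) (1 / M) s :=
      ((hasDerivAt_id s).div_const M).sub_const 1
    have e2 : HasDerivAt (fun u : ℝ => Real.smoothTransition (u / M - 1))
        (deriv Real.smoothTransition (s / M - 1) * (1 / M)) s :=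
      HasDerivAt.comp s (h₂ := Real.smoothTransition) (h := fun u : ℝ => u / M - 1)
      (hsm.differentiable (by norm_num) _).hasDerivAt e1
    have e3 : HasDerivAt (fun u : ℝ => ε / 2 * u - b) (ε / 2) s := by
      simpa using ((hasDerivAt_id s).const_mul (ε / 2)).sub_const b
    have e4 : deriv g s = _ := (e2.mul e3).deriv
    rw [e4]
    have m1 : s / M - 1 ∈ Icc (0:ℝ) 1 := by
      constructor
      · rw [sub_nonneg, one_le_div hM]
        exact h
      · rw [sub_le_iff_le_add, div_le_iff₀ hM]
        linarith
    have b1 := hC _ m1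
    have b2 := Real.smoothTransition.nonneg (s / M - 1)
    have b3 := Real.smoothTransition.le_one (s / M - 1)
    have b4 : |ε / 2 * s - b| ≤ ε * M + |b| := by
      refine (abs_sub _ _).trans ?_
      rw [abs_of_nonneg (by have : 0 ≤ s := by linarith
                            positivity)]
      nlinarith
    refine (abs_add_le _ _).trans ?_
    rw [add_comm]
    apply add_le_add
    · rw [abs_mul, abs_of_nonneg b2, abs_of_pos (show 0 < ε / 2 by positivity)]
      nlinarith
    · rw [abs_mul, abs_mul, abs_of_pos (show 0 < 1 / M by positivity)]
      rw [show C / M = C * (1 / M) by ring]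
      gcongr

lemma normsq_hasGradientAt {n : ℕ} {g : ℝ → ℝ} (hg : Differentiable ℝ g) (x : Esp n) :
    HasGradientAt (fun z : Esp n => g (‖z‖ ^ 2)) ((2 * deriv g (‖x‖ ^ 2)) • x) x := by
  rw [hasGradientAt_iff_hasFDerivAt]
  have h1 := (hg (‖x‖ ^ 2)).hasDerivAt.comp_hasFDerivAt x
    (hasStrictFDerivAt_norm_sq x).hasFDerivAt
  refine h1.congr_fderiv ?_
  ext v
  simp [InnerProductSpace.toDual_apply_apply]
  ring

/-- Proposition 2.4: modification of `H̃ = a·φ∘j` to an even Hamiltonian `H̄` which agrees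
with `H̃` on the sublevel set `{H̃ ≤ A}`, is quadratic `(ε/2)|x|²` at infinity, and has
exactly the same `T`-antiperiodic solutions. -/
theorem hamiltonian_modification (n : ℕ) (hn : 0 < n)
    (j : Esp n → ℝ) (hj : IsSymGauge n j)
    (T : ℝ) (hT : 0 < T)
    (τhat : ℝ)
    (hglb : IsGLB {τ : ℝ | ∃ y : ℝ → Esp n,
      IsClosedCharacteristic n j τ y ∧ ∀ t, y (t + τ / 2) = -y t} τhat)
    (hτhat : 0 < τhat)
    (a : ℝ) (ha : τhat / T < a)
    (φ : ℝ → ℝ) (hφsmooth : ContDiff ℝ (⊤ : ℕ∞) φ)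
    (hφnn : ∀ t, 0 ≤ φ t) (hφ0 : φ 0 = 0) (hφ'0 : deriv φ 0 = 0)
    (hφ''0 : deriv (deriv φ) 0 = 1)
    (hφpos : ∀ t, 0 < t → 0 < deriv φ t)
    (hφanti : StrictAntiOn (fun t => deriv φ t / t) (Ioi 0))
    (hφlim : ∃ δ : ℝ, Tendsto (fun t => deriv φ t / t) atTop (nhds δ) ∧ δ < τhat / (a * T)) :
    ∃ ε₀ : ℝ, 0 < ε₀ ∧ ∀ ε : ℝ, 0 < ε → ε ≤ ε₀ →
      ∃ (A R : ℝ) (Hbar : Esp n → ℝ), 0 < A ∧ 0 < R ∧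
        (∀ x, Hbar (-x) = Hbar x) ∧
        ContDiff ℝ 1 Hbar ∧ ContDiffOn ℝ 3 Hbar {(0 : Esp n)}ᶜ ∧
        (∀ x, a * φ (j x) ≤ A → Hbar x = a * φ (j x)) ∧
        (∀ x : Esp n, R ≤ ‖x‖ → Hbar x = ε / 2 * ‖x‖ ^ 2) ∧
        (∀ x : ℝ → Esp n,
          ((∀ t, HasDerivAt x (Jc n (gradient Hbar (x t))) t) ∧
            (∀ t, x (t + T / 2) = -x t)) ↔
          ((∀ t, HasDerivAt x (Jc n (gradient (fun z => a * φ (j z)) (x t))) t) ∧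
            (∀ t, x (t + T / 2) = -x t))) := by
  obtain ⟨δ, hδ, hδlt⟩ := hφlim
  have ha0 : 0 < a := lt_trans (by positivity) ha
  obtain ⟨c0, hc0, hc0lt⟩ : ∃ c0 : ℝ, 0 < c0 ∧ deriv φ c0 / c0 < τhat / (a * T) :=
    ((eventually_gt_atTop 0).and (hδ.eventually_lt_const hδlt)).exists
  have hbig : ∀ c, c0 ≤ c → deriv φ c / c < τhat / (a * T) := by
    intro c hc
    exact (hφanti.antitoneOn (mem_Ioi.2 hc0) (mem_Ioi.2 (hc0.trans_le hc)) hc).trans_lt hc0lt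
  have hφd : Differentiable ℝ φ := hφsmooth.differentiable (by simp)
  obtain ⟨ψ, B, hψ3, hψφ, hψ'φ, hψB, hψ'0, hψpos⟩ :=
    exists_truncation φ hφsmooth hφ0 (c0 + 1) (by linarith) hφpos
  have hψd : Differentiable ℝ ψ := hψ3.differentiable (by norm_num)
  have hψ00 : deriv ψ 0 = 0 := by rw [hψ'φ 0 (by linarith), hφ'0]
  have hkey : ∀ (x : ℝ → Esp n) (k c : ℝ), 0 < k → 0 < c → (∀ t, j (x t) = c) →
      (∀ t, HasDerivAt x ((a * k) • Jc n (gradient j (x t))) t) →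
      (∀ t, x (t + T / 2) = - x t) → k ≤ deriv φ c → c < c0 := by
    intro x k c hk hc hjx hx hanti hkφ
    by_contra hcc
    have h1 := hbig c (not_lt.1 hcc)
    have h2 := hglb.1 (hj.rescale T hT x (a * k) c (by positivity) hc hjx hx hanti)
    rw [div_lt_div_iff₀ hc (by positivity)] at h1
    rw [le_div_iff₀ hc] at h2
    have h3 : T * (a * k) ≤ T * (a * deriv φ c) := by gcongr
    nlinarith
  obtain ⟨C, hC0, hC⟩ := exists_transition_bound
  obtain ⟨L, hL0, hL⟩ := hj.lower
  refine ⟨1 / (T * (1 + 2 * C)), by positivity, fun ε hε hεle => ?_⟩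
  set b : ℝ := a * B with hb
  set M : ℝ := (L * (c0 + 3)) ^ 2 + 1 + 2 * C * |b| * T with hMdef
  have hM1 : 1 ≤ M := by
    have : 0 ≤ (L * (c0 + 3)) ^ 2 + 2 * C * |b| * T := by positivity
    rw [hMdef]
    linarith
  have hM0 : 0 < M := by linarith
  have hjM : ∀ z : Esp n, j z < c0 + 3 → ‖z‖ ^ 2 < M := by
    intro z hz
    have h1 : ‖z‖ ≤ L * (c0 + 3) := (hL z).trans (by gcongr)
    have h2 : ‖z‖ ^ 2 ≤ (L * (c0 + 3)) ^ 2 := by gcongr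
    have h3 : 0 ≤ 2 * C * |b| * T := by positivity
    rw [hMdef]
    linarith
  obtain ⟨g, hg3, hg0, hg'0, hgq, hgb⟩ := exists_outer C hC0 hC ε b M hε hM0
  have hgd : Differentiable ℝ g := hg3.differentiable (by norm_num)
  have hK : ∀ s, 2 * |deriv g s| ≤ 2 / T := by
    intro s
    have h1 := hgb s
    have h2 : C / M * (ε * M + |b|) = C * ε + C * |b| / M := by
      field_simp
    have h3 : 2 * (C * |b| / M) ≤ 1 / T := by
      rw [← mul_div_assoc, div_le_div_iff₀ hM0 hT, hMdef]
      nlinarith [sq_nonneg (L * (c0 + 3))]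
    have h4 : ε * (1 + 2 * C) ≤ 1 / T := by
      rw [le_div_iff₀ (by positivity)] at hεle
      rw [le_div_iff₀ hT]
      linarith
    have h5 : 2 / T = 1 / T + 1 / T := by ring
    rw [h5]
    linarith
  set Hbar : Esp n → ℝ := fun z => a * ψ (j z) + g (‖z‖ ^ 2) with hH
  have hgradH : ∀ z, gradient Hbar z =
      (a * deriv ψ (j z)) • gradient j z + (2 * deriv g (‖z‖ ^ 2)) • z := by
    intro z
    apply HasGradientAt.gradient
    rw [hasGradientAt_iff_hasFDerivAt, map_add]
    refine HasFDerivAt.add ?_ (hasGradientAt_iff_hasFDerivAt.1 (normsq_hasGradientAt hgd z))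
    have := (hj.comp_hasFDerivAt hψd hψ00 z).const_mul a
    rw [map_smul, toDual_gradient, ← smul_smul]
    exact this
  have hgradT : ∀ z, gradient (fun z => a * φ (j z)) z = (a * deriv φ (j z)) • gradient j z := by
    intro z
    apply HasGradientAt.gradient
    rw [hasGradientAt_iff_hasFDerivAt]
    have := (hj.comp_hasFDerivAt hφd hφ'0 z).const_mul a
    rw [map_smul, toDual_gradient, ← smul_smul]
    exact this
  have hgradH1 : ∀ z, j z < c0 + 3 → gradient Hbar z = (a * deriv ψ (j z)) • gradient j z := by
    intro z hz
    rw [hgradH, hg'0 _ (hjM z hz), mul_zero, zero_smul, add_zero]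
  have hmono : StrictMonoOn φ (Ici 0) := by
    apply strictMonoOn_of_deriv_pos (convex_Ici 0) hφd.continuous.continuousOn
    intro t ht
    rw [interior_Ici] at ht
    exact hφpos t ht
  have hφp : 0 < φ (c0 + 1) := by
    have := hmono (mem_Ici.2 le_rfl) (mem_Ici.2 (by linarith : (0:ℝ) ≤ c0 + 1)) (by linarith)
    rwa [hφ0] at this
  have hzero_of : ∀ x : ℝ → Esp n, (∀ t, j (x t) = 0) → ∀ t, x t = 0 := by
    intro x hx t
    by_contra h
    exact (hj.2.2.2.1 _ h).ne' (hx t)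
  refine ⟨a * φ (c0 + 1), 2 * M, Hbar, by positivity, by positivity, ?_, ?_, ?_, ?_, ?_, ?_⟩
  · intro x
    simp only [hH, norm_neg, hj.2.2.2.2]
  · exact (contDiff_const.mul (hj.comp_contDiff (hψ3.of_le (by norm_num)) hψ00)).add
      ((hg3.of_le (by norm_num)).comp (contDiff_norm_sq ℝ))
  · exact (contDiffOn_const.mul (hψ3.comp_contDiffOn hj.2.1)).add
      (hg3.comp (contDiff_norm_sq ℝ)).contDiffOn
  · intro x hx
    have h1 : φ (j x) ≤ φ (c0 + 1) := le_of_mul_le_mul_left hx ha0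
    have h2 : j x ≤ c0 + 1 :=
      (hmono.le_iff_le (mem_Ici.2 (hj.nonneg x)) (mem_Ici.2 (by linarith))).1 h1
    show a * ψ (j x) + g (‖x‖ ^ 2) = _
    rw [hψφ _ (hj.nonneg x) h2, hg0 _ (hjM x (by linarith)).le, add_zero]
  · intro x hx
    have h1 : 2 * M ≤ ‖x‖ ^ 2 := by nlinarith
    have h2 : c0 + 3 ≤ j x := by
      by_contra h
      have := hjM x (not_le.1 h)
      linarith
    show a * ψ (j x) + g (‖x‖ ^ 2) = _
    rw [hψB _ (by linarith), hgq _ h1, hb]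
    ring
  · intro x
    constructor
    · rintro ⟨hx, hanti⟩
      refine ⟨fun t => ?_, hanti⟩
      by_cases hex : ∃ t0, j (x t0) < c0 + 3
      · obtain ⟨t0, ht0⟩ := hex
        have hcons := hj.conserved x (fun t => a * deriv ψ (j (x t))) _ hx (c0 + 3)
          (fun t ht => by rw [hgradH1 _ ht, map_smul]) t0 ht0
        have hlt : j (x t0) < c0 := by
          rcases (hj.nonneg (x t0)).eq_or_lt with h0 | hpos
          · linarith
          have hx' : ∀ t, HasDerivAt x ((a * deriv ψ (j (x t0))) • Jc n (gradient j (x t))) t := by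
            intro t
            have := hx t
            rwa [hgradH1 _ (by rw [hcons]; exact ht0), map_smul, hcons] at this
          rcases (hψpos _ hpos).1.eq_or_lt with hk | hk
          · exfalso
            have := antiperiodic_zero T 0 hT le_rfl (by simp) x _ hx'
              (fun t => by rw [← hk]; simp) hanti t0
            rw [this, hj.zero] at hpos
            exact lt_irrefl _ hpos
          · exact hkey x _ _ hk hpos hcons hx' hanti (hψpos _ hpos).2
        have := hx t
        rwa [hgradH1 _ (by rw [hcons]; exact ht0), hψ'φ _ (by rw [hcons]; linarith),
          ← hgradT] at this
      · exfalso
        push Not at hex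
        have := antiperiodic_zero T (2 / T) hT (by positivity)
          (by rw [div_mul_cancel₀ _ hT.ne']; norm_num) x _ hx (fun t => by
            rw [Jc_norm, hgradH, hψ'0 _ (by have := hex t; linarith), mul_zero, zero_smul,
              zero_add, norm_smul, Real.norm_eq_abs, abs_mul, abs_two]
            gcongr
            exact hK _) hanti 0
        have h2 := hex 0
        rw [this, hj.zero] at h2
        linarith
    · rintro ⟨hx, hanti⟩
      refine ⟨fun t => ?_, hanti⟩
      have hcons := hj.conserved x (fun t => a * deriv φ (j (x t))) _ hx (j (x 0) + 1)
          (fun t _ => by rw [hgradT, map_smul]) 0 (by linarith)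
      have hlt : j (x 0) < c0 := by
        rcases (hj.nonneg (x 0)).eq_or_lt with h0 | hpos
        · linarith
        refine hkey x _ _ (hφpos _ hpos) hpos hcons (fun t => ?_) hanti le_rfl
        have := hx t
        rwa [hgradT, map_smul, hcons] at this
      have := hx t
      rwa [hgradT, ← hψ'φ _ (by rw [hcons]; linarith),
        ← hgradH1 _ (by rw [hcons]; linarith)] at this

end
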